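/- arXiv:2212.11567 — 2 statements merged into one kernel-verified Lean document; each statement's English description precedes it below -/
import Mathlib

section
/- The expected loss J is α-strongly convex as a function of K ∈ ℝ^{m×p} with coefficient α = 2 σ_min(Dᵀ D) (σ_min(C V_xx Cᵀ) + σ_min(V_vv)); that is, the function K ↦ J(K) − (α/2) ‖K‖_F² is convex on ℝ^{m×p}. -/
open MeasureTheory ProbabilityTheory Matrix

/-- Frobenius norm of a real matrix. -/
noncomputable def frobNorm {α β : Type*} [Fintype α] [Fintype β] (A : Matrix α β ℝ) : ℝ :=
  Real.sqrt (∑ i, ∑ j, (A i j) ^ 2)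

/-- Smallest singular value of a real square matrix. -/
noncomputable def sigmaMin {α : Type*} [Fintype α] [DecidableEq α] (A : Matrix α α ℝ) : ℝ :=
  sInf {c | ∃ x : EuclideanSpace ℝ α, ‖x‖ = 1 ∧ c = ‖Matrix.toEuclideanLin A x‖}

/-! Write `z = W + D K Y` with `W = H x` and `Y = C x + v`. The loss is a quadratic function of `K`
with second-order part `E‖D K Y‖²`, so subtracting `(α/2)‖K‖_F²` leaves a convex function as soon as
`E‖D K Y‖² ≥ (α/2)‖K‖_F²`. Since `x` and `v` are uncorrelated, `E[Y Yᵀ] = C V_xx Cᵀ + V_vv`; with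
`k_i` the rows of `K`, `E‖D K Y‖² ≥ σ_min(Dᵀ D) ∑ᵢ E(k_i ⬝ Y)²`, and each summand is at least
`(σ_min(C V_xx Cᵀ) + σ_min(V_vv)) ‖k_i‖²`. -/

section QuadraticPart

variable {E : Type*} [AddCommGroup E] [Module ℝ E]

/-- `f` is a polynomial of degree at most two on `E` whose homogeneous part of degree two is `q`.
This is encoded by the defect of `f` from being affine on each line, so that the affine part of `f`
need not be named. -/
def HasQuadraticPart (f q : E → ℝ) : Prop :=
  ∀ ⦃a b : ℝ⦄, a + b = 1 → ∀ x y, f (a • x + b • y) = a * f x + b * f y - a * b * q (x - y)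

namespace HasQuadraticPart

lemma const_add_linear_sq (c : ℝ) (L : E →ₗ[ℝ] ℝ) :
    HasQuadraticPart (fun x => (c + L x) ^ 2) (fun x => L x ^ 2) := by
  intro a b hab x y
  obtain rfl : b = 1 - a := by linarith
  simp only [map_add, map_sub, map_smul, smul_eq_mul]
  ring

lemma sum {ι : Type*} (s : Finset ι) {f q : ι → E → ℝ}
    (h : ∀ i ∈ s, HasQuadraticPart (f i) (q i)) :
    HasQuadraticPart (fun x => ∑ i ∈ s, f i x) (fun x => ∑ i ∈ s, q i x) := by
  intro a b hab x y
  dsimp only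
  rw [Finset.sum_congr rfl fun i hi => h i hi hab x y]
  simp only [Finset.sum_sub_distrib, Finset.sum_add_distrib, Finset.mul_sum]

lemma sub_const_mul {f q g r : E → ℝ} (hf : HasQuadraticPart f q) (hg : HasQuadraticPart g r)
    (c : ℝ) : HasQuadraticPart (fun x => f x - c * g x) (fun x => q x - c * r x) := by
  intro a b hab x y
  simp only [hf hab, hg hab]
  ring

lemma integral {Ω : Type*} [MeasurableSpace Ω] {μ : Measure Ω} {f q : Ω → E → ℝ}
    (h : ∀ ω, HasQuadraticPart (f ω) (q ω)) (hf : ∀ x, Integrable (fun ω => f ω x) μ)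
    (hq : ∀ x, Integrable (fun ω => q ω x) μ) :
    HasQuadraticPart (fun x => ∫ ω, f ω x ∂μ) (fun x => ∫ ω, q ω x ∂μ) := by
  intro a b hab x y
  simp only [fun ω => h ω hab x y]
  rw [integral_sub (((hf x).const_mul a).fun_add ((hf y).const_mul b)) ((hq (x - y)).const_mul _),
    integral_add ((hf x).const_mul a) ((hf y).const_mul b)]
  simp only [integral_const_mul]

lemma convexOn_univ {f q : E → ℝ} (h : HasQuadraticPart f q) (hq : ∀ x, 0 ≤ q x) :
    ConvexOn ℝ Set.univ f := by
  refine ⟨convex_univ, fun x _ y _ a b ha hb hab => ?_⟩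
  rw [h hab, smul_eq_mul, smul_eq_mul]
  exact sub_le_self _ (mul_nonneg (mul_nonneg ha hb) (hq _))

end HasQuadraticPart

end QuadraticPart

lemma frobNorm_sq {α β : Type*} [Fintype α] [Fintype β] (A : Matrix α β ℝ) :
    frobNorm A ^ 2 = ∑ i, ∑ j, A i j ^ 2 :=
  Real.sq_sqrt (by positivity)

lemma hasQuadraticPart_frobNorm_sq {α β : Type*} [Fintype α] [Fintype β] :
    HasQuadraticPart (fun K : Matrix α β ℝ => frobNorm K ^ 2) (fun K => frobNorm K ^ 2) := by
  simp only [frobNorm_sq]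
  refine .sum _ fun i _ => .sum _ fun j _ => ?_
  simpa using HasQuadraticPart.const_add_linear_sq 0 (entryLinearMap ℝ ℝ i j)

section SmallestSingularValue

open scoped MatrixOrder

variable {α : Type*} [Fintype α] [DecidableEq α] {A : Matrix α α ℝ}

lemma sigmaMin_nonneg (A : Matrix α α ℝ) : 0 ≤ sigmaMin A := by
  refine Real.sInf_nonneg ?_
  rintro _ ⟨x, -, rfl⟩
  exact norm_nonneg _

lemma sigmaMin_le_norm_toEuclideanLin (A : Matrix α α ℝ) {x : EuclideanSpace ℝ α} (hx : ‖x‖ = 1) :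
    sigmaMin A ≤ ‖toEuclideanLin A x‖ := by
  refine csInf_le ⟨0, ?_⟩ ⟨x, hx, rfl⟩
  rintro _ ⟨y, -, rfl⟩
  exact norm_nonneg _

lemma sigmaMin_le_abs_eigenvalues (hA : A.IsHermitian) (i : α) :
    sigmaMin A ≤ |hA.eigenvalues i| := by
  have hunit : ‖hA.eigenvectorBasis i‖ = 1 := hA.eigenvectorBasis.orthonormal.1 i
  have heigen : toEuclideanLin A (hA.eigenvectorBasis i) =
      hA.eigenvalues i • hA.eigenvectorBasis i :=
    WithLp.ofLp_injective 2 (hA.mulVec_eigenvectorBasis i)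
  simpa [heigen, norm_smul, hunit] using sigmaMin_le_norm_toEuclideanLin A hunit

lemma algebraMap_sigmaMin_le (hA : A.PosSemidef) :
    algebraMap ℝ (Matrix α α ℝ) (sigmaMin A) ≤ A := by
  rw [algebraMap_le_iff_le_spectrum (ha := hA.isHermitian.isSelfAdjoint),
    hA.isHermitian.spectrum_real_eq_range_eigenvalues, Set.forall_mem_range]
  intro i
  simpa only [abs_of_nonneg (hA.eigenvalues_nonneg i)] using
    sigmaMin_le_abs_eigenvalues hA.isHermitian i

lemma mul_dotProduct_self_le_of_algebraMap_le {c : ℝ} (h : algebraMap ℝ (Matrix α α ℝ) c ≤ A)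
    (u : α → ℝ) : c * (u ⬝ᵥ u) ≤ u ⬝ᵥ A *ᵥ u := by
  have hu := (le_iff.1 h).dotProduct_mulVec_nonneg u
  simpa [sub_mulVec, Algebra.algebraMap_eq_smul_one, smul_mulVec, dotProduct_sub] using hu

end SmallestSingularValue

section SecondMoment

variable {Ω : Type*} [MeasurableSpace Ω] {μ : Measure Ω} {ι κ : Type*}

lemma integral_mul_eq_zero_of_indepFun {x : Ω → ι → ℝ} {v : Ω → κ → ℝ} (h : IndepFun x v μ)
    (hx : AEStronglyMeasurable x μ) (hv : AEStronglyMeasurable v μ)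
    (hmean : ∀ j, ∫ ω, v ω j ∂μ = 0) (i : ι) (j : κ) : ∫ ω, x ω i * v ω j ∂μ = 0 := by
  have hij : IndepFun (fun ω => x ω i) (fun ω => v ω j) μ :=
    h.comp (measurable_pi_apply i) (measurable_pi_apply j)
  rw [hij.integral_fun_mul_eq_mul_integral
    ((continuous_apply i).comp_aestronglyMeasurable hx)
    ((continuous_apply j).comp_aestronglyMeasurable hv), hmean, mul_zero]

variable [Fintype ι] [Fintype κ]

lemma memLp_mulVec {X : Ω → ι → ℝ} {r : ENNReal} (hX : MemLp X r μ) (A : Matrix κ ι ℝ) :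
    MemLp (fun ω => A *ᵥ X ω) r μ :=
  A.mulVecLin.toContinuousLinearMap.comp_memLp' hX

lemma integrable_sum_sq {X : Ω → ι → ℝ} (hX : MemLp X 2 μ) :
    Integrable (fun ω => ∑ i, X ω i ^ 2) μ :=
  integrable_finsetSum _ fun i _ => (hX.eval i).integrable_sq

lemma integrable_eval_mul_eval {X : Ω → ι → ℝ} {Y : Ω → κ → ℝ} (hX : MemLp X 2 μ)
    (hY : MemLp Y 2 μ) (i : ι) (j : κ) : Integrable (fun ω => X ω i * Y ω j) μ :=
  (hX.eval i).integrable_mul (hY.eval j)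

lemma integral_mulVec_mul_eq_zero {X : Ω → ι → ℝ} {Y : Ω → κ → ℝ} (hX : MemLp X 2 μ)
    (hY : MemLp Y 2 μ) (hXY : ∀ i j, ∫ ω, X ω i * Y ω j ∂μ = 0) {τ : Type*} (A : Matrix τ ι ℝ)
    (i : τ) (j : κ) : ∫ ω, (A *ᵥ X ω) i * Y ω j ∂μ = 0 := by
  simp only [mulVec, dotProduct, Finset.sum_mul, mul_assoc]
  rw [integral_finsetSum _ fun k _ => (integrable_eval_mul_eval hX hY k j).const_mul (A i k)]
  simp only [integral_const_mul, hXY, mul_zero, Finset.sum_const_zero]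

/-- The random vector `X` is square integrable with second-moment matrix `V = E[X Xᵀ]`. For
centered `X` this is the covariance matrix. -/
structure HasSecondMoment (X : Ω → ι → ℝ) (V : Matrix ι ι ℝ) (μ : Measure Ω) : Prop where
  memLp : MemLp X 2 μ
  integral_mul : ∀ i j, ∫ ω, X ω i * X ω j ∂μ = V i j

namespace HasSecondMoment

variable {X Y : Ω → ι → ℝ} {V W : Matrix ι ι ℝ}

lemma of_integrable_mul (hX : AEStronglyMeasurable X μ)
    (hsq : ∀ i, Integrable (fun ω => X ω i * X ω i) μ)
    (hV : ∀ i j, ∫ ω, X ω i * X ω j ∂μ = V i j) : HasSecondMoment X V μ where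
  memLp := .of_eval fun i =>
    (memLp_two_iff_integrable_sq ((continuous_apply i).comp_aestronglyMeasurable hX)).2
      (by simpa only [sq] using hsq i)
  integral_mul := hV

lemma integral_dotProduct_mul_dotProduct (hX : HasSecondMoment X V μ) (u w : ι → ℝ) :
    ∫ ω, (u ⬝ᵥ X ω) * (w ⬝ᵥ X ω) ∂μ = u ⬝ᵥ V *ᵥ w := by
  have hintegrable (i j : ι) : Integrable (fun ω => u i * w j * (X ω i * X ω j)) μ :=
    (integrable_eval_mul_eval hX.memLp hX.memLp i j).const_mul _
  calc ∫ ω, (u ⬝ᵥ X ω) * (w ⬝ᵥ X ω) ∂μ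
      = ∫ ω, ∑ i, ∑ j, u i * w j * (X ω i * X ω j) ∂μ := by
        simp only [dotProduct, Finset.sum_mul_sum, mul_mul_mul_comm]
    _ = ∑ i, ∑ j, u i * w j * V i j := by
        rw [integral_finsetSum _ fun i _ => integrable_finsetSum _ fun j _ => hintegrable i j]
        simp only [integral_finsetSum _ fun j _ => hintegrable _ j, integral_const_mul,
          hX.integral_mul]
    _ = u ⬝ᵥ V *ᵥ w := by
        simp only [dotProduct, mulVec, Finset.mul_sum, mul_assoc, mul_comm (w _)]

lemma posSemidef (hX : HasSecondMoment X V μ) : V.PosSemidef := by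
  refine .of_dotProduct_mulVec_nonneg (IsHermitian.ext fun i j => ?_) fun u => ?_
  · simp only [← hX.integral_mul, mul_comm, star_trivial]
  · rw [star_trivial, ← hX.integral_dotProduct_mul_dotProduct]
    exact integral_nonneg fun ω => mul_self_nonneg _

lemma mulVec (hX : HasSecondMoment X V μ) (A : Matrix κ ι ℝ) :
    HasSecondMoment (fun ω => A *ᵥ X ω) (A * V * Aᵀ) μ where
  memLp := memLp_mulVec hX.memLp A
  integral_mul i j := by
    rw [Matrix.mul_assoc]
    exact hX.integral_dotProduct_mul_dotProduct (A i) (A j)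

lemma add (hX : HasSecondMoment X V μ) (hY : HasSecondMoment Y W μ)
    (hXY : ∀ i j, ∫ ω, X ω i * Y ω j ∂μ = 0) :
    HasSecondMoment (fun ω => X ω + Y ω) (V + W) μ where
  memLp := hX.memLp.add hY.memLp
  integral_mul i j := by
    have hXX := integrable_eval_mul_eval hX.memLp hX.memLp i j
    have hYY := integrable_eval_mul_eval hY.memLp hY.memLp i j
    have hXYij := integrable_eval_mul_eval hX.memLp hY.memLp i j
    have hXYji := integrable_eval_mul_eval hX.memLp hY.memLp j i
    have hexpand (ω : Ω) : (X ω + Y ω) i * (X ω + Y ω) j =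
        (X ω i * X ω j + Y ω i * Y ω j) + (X ω i * Y ω j + X ω j * Y ω i) := by
      simp only [Pi.add_apply]
      ring
    simp only [hexpand]
    rw [integral_add (hXX.fun_add hYY) (hXYij.fun_add hXYji), integral_add hXX hYY,
      integral_add hXYij hXYji, hXY, hXY, hX.integral_mul, hY.integral_mul, add_zero, add_zero,
      Matrix.add_apply]

open scoped MatrixOrder

variable [DecidableEq ι] {c : ℝ}

lemma mul_frobNorm_sq_le_integral (hX : HasSecondMoment X V μ)
    (hc : algebraMap ℝ (Matrix ι ι ℝ) c ≤ V) (K : Matrix κ ι ℝ) :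
    c * frobNorm K ^ 2 ≤ ∫ ω, ∑ i, (K *ᵥ X ω) i ^ 2 ∂μ := by
  have hrow (i : κ) : c * ∑ j, K i j ^ 2 ≤ ∫ ω, (K *ᵥ X ω) i ^ 2 ∂μ := by
    calc c * ∑ j, K i j ^ 2 = c * (K i ⬝ᵥ K i) := by simp only [dotProduct, sq]
      _ ≤ K i ⬝ᵥ V *ᵥ K i := mul_dotProduct_self_le_of_algebraMap_le hc (K i)
      _ = ∫ ω, (K *ᵥ X ω) i ^ 2 ∂μ := by
        simp only [← hX.integral_dotProduct_mul_dotProduct, sq, Matrix.mulVec]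
  rw [frobNorm_sq, Finset.mul_sum,
    integral_finsetSum _ fun i _ => ((memLp_mulVec hX.memLp K).eval i).integrable_sq]
  exact Finset.sum_le_sum fun i _ => hrow i

variable {τ : Type*} [Fintype τ] [DecidableEq κ] {D : Matrix τ κ ℝ} {d : ℝ}

lemma mul_mul_frobNorm_sq_le_integral (hX : HasSecondMoment X V μ)
    (hc : algebraMap ℝ (Matrix ι ι ℝ) c ≤ V) (hd : algebraMap ℝ (Matrix κ κ ℝ) d ≤ Dᵀ * D)
    (hd0 : 0 ≤ d) (K : Matrix κ ι ℝ) :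
    d * c * frobNorm K ^ 2 ≤ ∫ ω, ∑ j, (D *ᵥ K *ᵥ X ω) j ^ 2 ∂μ := by
  have hKX : MemLp (fun ω => K *ᵥ X ω) 2 μ := memLp_mulVec hX.memLp K
  have hD (w : κ → ℝ) : d * ∑ i, w i ^ 2 ≤ ∑ j, (D *ᵥ w) j ^ 2 := by
    have hw := mul_dotProduct_self_le_of_algebraMap_le hd w
    rw [← mulVec_mulVec, dotProduct_mulVec, vecMul_transpose] at hw
    simpa only [dotProduct, sq] using hw
  calc d * c * frobNorm K ^ 2
      = d * (c * frobNorm K ^ 2) := mul_assoc _ _ _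
    _ ≤ d * ∫ ω, ∑ i, (K *ᵥ X ω) i ^ 2 ∂μ :=
        mul_le_mul_of_nonneg_left (hX.mul_frobNorm_sq_le_integral hc K) hd0
    _ = ∫ ω, d * ∑ i, (K *ᵥ X ω) i ^ 2 ∂μ := (integral_const_mul _ _).symm
    _ ≤ ∫ ω, ∑ j, (D *ᵥ K *ᵥ X ω) j ^ 2 ∂μ :=
        integral_mono ((integrable_sum_sq hKX).const_mul d)
          (integrable_sum_sq (memLp_mulVec hKX D)) fun ω => hD (K *ᵥ X ω)

lemma convexOn_integral_sum_sq_sub (hX : HasSecondMoment X V μ)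
    (hc : algebraMap ℝ (Matrix ι ι ℝ) c ≤ V) (hd : algebraMap ℝ (Matrix κ κ ℝ) d ≤ Dᵀ * D)
    (hd0 : 0 ≤ d) {Z : Ω → τ → ℝ} (hZ : MemLp Z 2 μ) :
    ConvexOn ℝ Set.univ (fun K : Matrix κ ι ℝ =>
      (∫ ω, ∑ j, (Z ω + D *ᵥ K *ᵥ X ω) j ^ 2 ∂μ) - d * c * frobNorm K ^ 2) := by
  have hDKX (K : Matrix κ ι ℝ) : MemLp (fun ω => D *ᵥ K *ᵥ X ω) 2 μ :=
    memLp_mulVec (memLp_mulVec hX.memLp K) D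
  have hpointwise (ω : Ω) : HasQuadraticPart
      (fun K : Matrix κ ι ℝ => ∑ j, (Z ω + D *ᵥ K *ᵥ X ω) j ^ 2)
      (fun K => ∑ j, (D *ᵥ K *ᵥ X ω) j ^ 2) :=
    .sum _ fun j _ => .const_add_linear_sq (Z ω j)
      (LinearMap.proj j ∘ₗ D.mulVecLin ∘ₗ (mulVecBilin ℝ ℝ).flip (X ω))
  have hloss := HasQuadraticPart.integral hpointwise
    (fun K => integrable_sum_sq (hZ.add (hDKX K))) (fun K => integrable_sum_sq (hDKX K))
  exact (hloss.sub_const_mul hasQuadraticPart_frobNorm_sq (d * c)).convexOn_univ fun K =>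
    sub_nonneg.2 (hX.mul_mul_frobNorm_sq_le_integral hc hd hd0 K)

end HasSecondMoment

open scoped MatrixOrder in
theorem stmt_2_general {τ ρ : Type*} [Fintype τ] [Fintype ρ] [DecidableEq ρ] [DecidableEq κ]
    (H : Matrix τ ι ℝ) (D : Matrix τ ρ ℝ) (C : Matrix κ ι ℝ) {x : Ω → ι → ℝ} {v : Ω → κ → ℝ}
    {Vxx : Matrix ι ι ℝ} {Vvv : Matrix κ κ ℝ} (hx : HasSecondMoment x Vxx μ)
    (hv : HasSecondMoment v Vvv μ) (hxv : ∀ i j, ∫ ω, x ω i * v ω j ∂μ = 0) (α : ℝ)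
    (hα : α = 2 * sigmaMin (Dᵀ * D) * (sigmaMin (C * Vxx * Cᵀ) + sigmaMin Vvv)) :
    ConvexOn ℝ Set.univ (fun K : Matrix ρ κ ℝ =>
      (∫ ω, ∑ j, ((H.mulVec (x ω) + D.mulVec (K.mulVec (C.mulVec (x ω) + v ω))) j) ^ 2 ∂μ)
        - (α / 2) * (frobNorm K) ^ 2) := by
  have hy : HasSecondMoment (fun ω => C *ᵥ x ω + v ω) (C * Vxx * Cᵀ + Vvv) μ :=
    (hx.mulVec C).add hv (integral_mulVec_mul_eq_zero hx.memLp hv.memLp hxv C)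
  have hVy : algebraMap ℝ (Matrix κ κ ℝ) (sigmaMin (C * Vxx * Cᵀ) + sigmaMin Vvv) ≤
      C * Vxx * Cᵀ + Vvv := by
    rw [map_add]
    exact add_le_add (algebraMap_sigmaMin_le (hx.mulVec C).posSemidef)
      (algebraMap_sigmaMin_le hv.posSemidef)
  have hDD : algebraMap ℝ (Matrix ρ ρ ℝ) (sigmaMin (Dᵀ * D)) ≤ Dᵀ * D :=
    algebraMap_sigmaMin_le (posSemidef_conjTranspose_mul_self D)
  have hα' : α / 2 = sigmaMin (Dᵀ * D) * (sigmaMin (C * Vxx * Cᵀ) + sigmaMin Vvv) := by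
    rw [hα, mul_assoc, mul_div_cancel_left₀ _ two_ne_zero]
  rw [hα']
  exact hy.convexOn_integral_sum_sq_sub hVy hDD (sigmaMin_nonneg _) (memLp_mulVec hx.memLp H)

end SecondMoment

/-- The expected loss `J` is `α`-strongly convex in `K` with
`α = 2 σ_min(Dᵀ D)(σ_min(C V_xx Cᵀ) + σ_min(V_vv))`; i.e. `K ↦ J(K) − (α/2)‖K‖_F²`
is convex on `ℝ^{m×p}`. -/
theorem stmt_2
    {Ω : Type*} [MeasurableSpace Ω] (μ : Measure Ω) [IsProbabilityMeasure μ]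
    (n p l m : ℕ) (hn : 0 < n) (hp : 0 < p) (hl : 0 < l) (hm : 0 < m)
    (H : Matrix (Fin l) (Fin n) ℝ) (D : Matrix (Fin l) (Fin m) ℝ)
    (C : Matrix (Fin p) (Fin n) ℝ)
    (x : Ω → Fin n → ℝ) (v : Ω → Fin p → ℝ)
    (hxmeas : Measurable x) (hvmeas : Measurable v)
    (hindep : IndepFun x v μ)
    (hxmean : ∀ i, ∫ ω, x ω i ∂μ = 0) (hvmean : ∀ i, ∫ ω, v ω i ∂μ = 0)
    (Vxx : Matrix (Fin n) (Fin n) ℝ) (Vvv : Matrix (Fin p) (Fin p) ℝ)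
    (hVxxInt : ∀ i j, Integrable (fun ω => x ω i * x ω j) μ)
    (hVxx : ∀ i j, ∫ ω, x ω i * x ω j ∂μ = Vxx i j)
    (hVvvInt : ∀ i j, Integrable (fun ω => v ω i * v ω j) μ)
    (hVvv : ∀ i j, ∫ ω, v ω i * v ω j ∂μ = Vvv i j)
    (α : ℝ)
    (hα : α = 2 * sigmaMin (Dᵀ * D) * (sigmaMin (C * Vxx * Cᵀ) + sigmaMin Vvv)) :
    ConvexOn ℝ Set.univ (fun K : Matrix (Fin m) (Fin p) ℝ =>
      (∫ ω, ∑ j, ((H.mulVec (x ω) + D.mulVec (K.mulVec (C.mulVec (x ω) + v ω))) j) ^ 2 ∂μ)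
        - (α / 2) * (frobNorm K) ^ 2) :=
  stmt_2_general H D C (.of_integrable_mul hxmeas.aestronglyMeasurable (fun i => hVxxInt i i) hVxx)
    (.of_integrable_mul hvmeas.aestronglyMeasurable (fun i => hVvvInt i i) hVvv)
    (integral_mul_eq_zero_of_indepFun hindep hxmeas.aestronglyMeasurable
      hvmeas.aestronglyMeasurable hvmean) α hα
end

section
/- If ‖K‖₂ ≤ b_K, then the gradient estimate G = 2 Dᵀ z yᵀ has bounded second moment: E[‖2 Dᵀ z yᵀ‖_F²] ≤ 4 ‖D‖₂² (‖H‖₂ + b_K ‖D‖₂ (‖C‖₂ + 1))² (‖C‖₂ + 1)² (κ_x + 2 Tr V_xx Tr V_vv + κ_v). -/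
open MeasureTheory ProbabilityTheory Matrix

/-- Operator (spectral) norm of a real matrix. -/
noncomputable def opNorm {α β : Type*} [Fintype α] [Fintype β] [DecidableEq β]
    (A : Matrix α β ℝ) : ℝ :=
  ‖LinearMap.toContinuousLinearMap (Matrix.toEuclideanLin A)‖

/-!
With `r = max ‖x‖ ‖v‖`, the triangle inequality gives `‖y‖ ≤ (‖C‖ + 1) r` and
`‖z‖ ≤ (‖H‖ + b_K ‖D‖ (‖C‖ + 1)) r`. The gradient estimate has rank one, so its Frobenius norm is
`2 ‖Dᵀ z‖ ‖y‖`, which is at most a constant times `r ^ 2 ≤ ‖x‖ ^ 2 + ‖v‖ ^ 2`. Squaring and taking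
expectations, independence splits the cross term into `E ‖x‖ ^ 2 * E ‖v‖ ^ 2`, a product of traces.
-/

open WithLp

section EuclideanNorm

variable {α β : Type*} [Fintype α] [Fintype β]

open scoped Matrix.Norms.L2Operator in
theorem opNorm_eq_l2_opNorm [DecidableEq β] (A : Matrix α β ℝ) : opNorm A = ‖A‖ := rfl

theorem opNorm_nonneg [DecidableEq β] (A : Matrix α β ℝ) : 0 ≤ opNorm A := norm_nonneg _

theorem opNorm_transpose [DecidableEq α] [DecidableEq β] (A : Matrix α β ℝ) :
    opNorm Aᵀ = opNorm A := by
  rw [opNorm_eq_l2_opNorm, opNorm_eq_l2_opNorm, ← conjTranspose_eq_transpose_of_trivial,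
    l2_opNorm_conjTranspose]

theorem norm_toLp_mulVec_le [DecidableEq β] (A : Matrix α β ℝ) (u : β → ℝ) :
    ‖toLp 2 (A *ᵥ u)‖ ≤ opNorm A * ‖toLp 2 u‖ :=
  l2_opNorm_mulVec A (toLp 2 u)

theorem norm_toLp_transpose_mulVec_le [DecidableEq β] (A : Matrix α β ℝ) (u : α → ℝ) :
    ‖toLp 2 (Aᵀ *ᵥ u)‖ ≤ opNorm A * ‖toLp 2 u‖ := by
  classical
  exact opNorm_transpose A ▸ norm_toLp_mulVec_le Aᵀ u

theorem norm_toLp_mulVec_add_le [DecidableEq β] (A : Matrix α β ℝ) (u : β → ℝ) (w : α → ℝ) :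
    ‖toLp 2 (A *ᵥ u + w)‖ ≤ opNorm A * ‖toLp 2 u‖ + ‖toLp 2 w‖ :=
  (norm_add_le (toLp 2 (A *ᵥ u)) (toLp 2 w)).trans (by gcongr; exact norm_toLp_mulVec_le A u)

theorem sum_sum_vecMulVec_sq (u : α → ℝ) (w : β → ℝ) :
    ∑ a, ∑ b, vecMulVec u w a b ^ 2 = (‖toLp 2 u‖ * ‖toLp 2 w‖) ^ 2 := by
  simp only [mul_pow, EuclideanSpace.real_norm_sq_eq, Finset.sum_mul_sum, vecMulVec_apply]

end EuclideanNorm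

section SecondMoments

variable {Ω : Type*} [MeasurableSpace Ω] {μ : Measure Ω} {ι : Type*} [Fintype ι]

theorem integral_add_sq_of_indepFun {S T : Ω → ℝ} (hS : MemLp S 2 μ) (hT : MemLp T 2 μ)
    (hST : IndepFun S T μ) :
    ∫ ω, (S ω + T ω) ^ 2 ∂μ
      = ∫ ω, S ω ^ 2 ∂μ + 2 * (∫ ω, S ω ∂μ) * (∫ ω, T ω ∂μ) + ∫ ω, T ω ^ 2 ∂μ := by
  have hcross : Integrable (fun ω => 2 * (S ω * T ω)) μ := (hS.integrable_mul hT).const_mul 2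
  have hpartial : Integrable (fun ω => S ω ^ 2 + 2 * (S ω * T ω)) μ := hS.integrable_sq.add hcross
  calc ∫ ω, (S ω + T ω) ^ 2 ∂μ
      = ∫ ω, S ω ^ 2 + 2 * (S ω * T ω) + T ω ^ 2 ∂μ := by simp only [add_sq, mul_assoc]
    _ = ∫ ω, S ω ^ 2 ∂μ + 2 * ∫ ω, S ω * T ω ∂μ + ∫ ω, T ω ^ 2 ∂μ := by
      rw [integral_add hpartial hT.integrable_sq,
        integral_add hS.integrable_sq hcross, integral_const_mul]
    _ = _ := by
      rw [hST.integral_fun_mul_eq_mul_integral hS.aestronglyMeasurable hT.aestronglyMeasurable,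
        mul_assoc 2]

theorem integral_sum_sq_eq_trace {x : Ω → ι → ℝ} {V : Matrix ι ι ℝ}
    (hint : ∀ i, Integrable (fun ω => x ω i * x ω i) μ)
    (hV : ∀ i, ∫ ω, x ω i * x ω i ∂μ = V i i) :
    ∫ ω, ∑ i, x ω i ^ 2 ∂μ = V.trace := by
  simp only [sq, integral_finsetSum _ fun i _ => hint i, hV, trace, diag_apply]

theorem memLp_two_sum_sq {x : Ω → ι → ℝ} (hx : AEMeasurable x μ)
    (hx4 : Integrable (fun ω => (∑ i, x ω i ^ 2) ^ 2) μ) :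
    MemLp (fun ω => ∑ i, x ω i ^ 2) 2 μ :=
  (memLp_two_iff_integrable_sq (by fun_prop)).2 hx4

end SecondMoments

section GradientEstimate

variable {n p l m : Type*} [Fintype n] [Fintype p] [Fintype l] [Fintype m]

/-- The measurement `y = C x + v` of the state `x` under the noise `v`. -/
def measurement (C : Matrix p n ℝ) (x : n → ℝ) (v : p → ℝ) : p → ℝ := C *ᵥ x + v

/-- The output `z = H x + D K y` of the feedback `K` acting on the measurement `y = C x + v`. -/
def closedLoopOutput (H : Matrix l n ℝ) (D : Matrix l m ℝ) (C : Matrix p n ℝ) (K : Matrix m p ℝ)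
    (x : n → ℝ) (v : p → ℝ) : l → ℝ :=
  H *ᵥ x + D *ᵥ (K *ᵥ measurement C x v)

/-- The gradient estimate `G = 2 Dᵀ z yᵀ`, written as the outer product of `2 Dᵀ z` and `y`. -/
def gradientEstimate (H : Matrix l n ℝ) (D : Matrix l m ℝ) (C : Matrix p n ℝ) (K : Matrix m p ℝ)
    (x : n → ℝ) (v : p → ℝ) : Matrix m p ℝ :=
  vecMulVec ((2 : ℝ) • Dᵀ *ᵥ closedLoopOutput H D C K x v) (measurement C x v)

variable [DecidableEq n] [DecidableEq m]

/-- The constant `L` in the bound `‖G‖_F ≤ L (‖x‖² + ‖v‖²)` on the gradient estimate, valid for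
every feedback with `‖K‖₂ ≤ bK`. -/
noncomputable def gradientGain (H : Matrix l n ℝ) (D : Matrix l m ℝ) (C : Matrix p n ℝ) (bK : ℝ) :
    ℝ :=
  2 * opNorm D * (opNorm H + bK * opNorm D * (opNorm C + 1)) * (opNorm C + 1)

theorem norm_toLp_measurement_le (C : Matrix p n ℝ) {x : n → ℝ} {v : p → ℝ} {r : ℝ}
    (hx : ‖toLp 2 x‖ ≤ r) (hv : ‖toLp 2 v‖ ≤ r) :
    ‖toLp 2 (measurement C x v)‖ ≤ (opNorm C + 1) * r :=
  calc ‖toLp 2 (measurement C x v)‖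
      ≤ opNorm C * ‖toLp 2 x‖ + ‖toLp 2 v‖ := norm_toLp_mulVec_add_le C x v
    _ ≤ opNorm C * r + r := by gcongr; exact opNorm_nonneg C
    _ = (opNorm C + 1) * r := by ring

variable [DecidableEq p]

theorem norm_toLp_closedLoopOutput_le (H : Matrix l n ℝ) (D : Matrix l m ℝ) (C : Matrix p n ℝ)
    {K : Matrix m p ℝ} {bK : ℝ} (hK : opNorm K ≤ bK) {x : n → ℝ} {v : p → ℝ} {r : ℝ}
    (hx : ‖toLp 2 x‖ ≤ r) (hv : ‖toLp 2 v‖ ≤ r) :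
    ‖toLp 2 (closedLoopOutput H D C K x v)‖
      ≤ (opNorm H + bK * opNorm D * (opNorm C + 1)) * r := by
  have hH := opNorm_nonneg H
  have hD := opNorm_nonneg D
  have hbK : 0 ≤ bK := (opNorm_nonneg K).trans hK
  set y := measurement C x v
  calc ‖toLp 2 (H *ᵥ x + D *ᵥ (K *ᵥ y))‖
      ≤ opNorm H * ‖toLp 2 x‖ + ‖toLp 2 (D *ᵥ (K *ᵥ y))‖ := norm_toLp_mulVec_add_le H x _
    _ ≤ opNorm H * ‖toLp 2 x‖ + opNorm D * (opNorm K * ‖toLp 2 y‖) := by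
      gcongr
      exact (norm_toLp_mulVec_le D _).trans (by gcongr; exact norm_toLp_mulVec_le K y)
    _ ≤ opNorm H * r + opNorm D * (bK * ((opNorm C + 1) * r)) := by
      gcongr
      exact norm_toLp_measurement_le C hx hv
    _ = (opNorm H + bK * opNorm D * (opNorm C + 1)) * r := by ring

theorem sum_sum_gradientEstimate_sq_le (H : Matrix l n ℝ) (D : Matrix l m ℝ) (C : Matrix p n ℝ)
    {K : Matrix m p ℝ} {bK : ℝ} (hK : opNorm K ≤ bK) (x : n → ℝ) (v : p → ℝ) :
    ∑ a, ∑ b, gradientEstimate H D C K x v a b ^ 2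
      ≤ (gradientGain H D C bK * (∑ i, x i ^ 2 + ∑ i, v i ^ 2)) ^ 2 := by
  have hH := opNorm_nonneg H
  have hD := opNorm_nonneg D
  have hC := opNorm_nonneg C
  have hbK : 0 ≤ bK := (opNorm_nonneg K).trans hK
  set r := max ‖toLp 2 x‖ ‖toLp 2 v‖ with hr
  have hy := norm_toLp_measurement_le C (le_max_left _ _ : _ ≤ r) (le_max_right _ _)
  have hz := norm_toLp_closedLoopOutput_le H D C hK (le_max_left _ _ : _ ≤ r) (le_max_right _ _)
  have hr_sq : r ^ 2 ≤ ∑ i, x i ^ 2 + ∑ i, v i ^ 2 := by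
    rw [← EuclideanSpace.real_norm_sq_eq (toLp 2 x), ← EuclideanSpace.real_norm_sq_eq (toLp 2 v)]
    rcases max_choice ‖toLp 2 x‖ ‖toLp 2 v‖ with h | h <;> rw [hr, h] <;> simp
  have hfrobenius : ‖toLp 2 ((2 : ℝ) • Dᵀ *ᵥ closedLoopOutput H D C K x v)‖
      * ‖toLp 2 (measurement C x v)‖ ≤ gradientGain H D C bK * r ^ 2 := by
    rw [toLp_smul, norm_smul, Real.norm_two]
    calc 2 * ‖toLp 2 (Dᵀ *ᵥ closedLoopOutput H D C K x v)‖ * ‖toLp 2 (measurement C x v)‖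
        ≤ 2 * (opNorm D * ((opNorm H + bK * opNorm D * (opNorm C + 1)) * r))
            * ((opNorm C + 1) * r) := by
          gcongr
          exact (norm_toLp_transpose_mulVec_le D _).trans (by gcongr)
      _ = gradientGain H D C bK * r ^ 2 := by unfold gradientGain; ring
  have hgain : 0 ≤ gradientGain H D C bK := by unfold gradientGain; positivity
  rw [gradientEstimate, sum_sum_vecMulVec_sq]
  exact pow_le_pow_left₀ (by positivity) (hfrobenius.trans (by gcongr)) 2

variable {Ω : Type*} [MeasurableSpace Ω] {μ : Measure Ω} {x : Ω → n → ℝ} {v : Ω → p → ℝ}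

omit [DecidableEq n] [DecidableEq m] [DecidableEq p] in
theorem integrable_sum_sum_gradientEstimate_sq (H : Matrix l n ℝ) (D : Matrix l m ℝ)
    (C : Matrix p n ℝ) (K : Matrix m p ℝ) (hx : AEMeasurable x μ) (hv : AEMeasurable v μ)
    (hx4 : Integrable (fun ω => (∑ i, x ω i ^ 2) ^ 2) μ)
    (hv4 : Integrable (fun ω => (∑ i, v ω i ^ 2) ^ 2) μ) :
    Integrable (fun ω => ∑ a, ∑ b, gradientEstimate H D C K (x ω) (v ω) a b ^ 2) μ := by
  classical
  have hcont : Continuous fun u : (n → ℝ) × (p → ℝ) =>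
      ∑ a, ∑ b, gradientEstimate H D C K u.1 u.2 a b ^ 2 := by
    unfold gradientEstimate closedLoopOutput measurement
    fun_prop
  have hdom := (((memLp_two_sum_sq hx hx4).add (memLp_two_sum_sq hv hv4)).const_mul
    (gradientGain H D C (opNorm K))).integrable_sq
  refine hdom.mono' (hcont.measurable.comp_aemeasurable (hx.prodMk hv)).aestronglyMeasurable
    (.of_forall fun ω => ?_)
  rw [Real.norm_of_nonneg (by positivity)]
  exact sum_sum_gradientEstimate_sq_le H D C le_rfl (x ω) (v ω)

theorem integral_sum_sum_gradientEstimate_sq_le (H : Matrix l n ℝ) (D : Matrix l m ℝ)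
    (C : Matrix p n ℝ) {K : Matrix m p ℝ} {bK : ℝ} (hK : opNorm K ≤ bK)
    (hx : AEMeasurable x μ) (hv : AEMeasurable v μ) (hindep : IndepFun x v μ)
    (hx4 : Integrable (fun ω => (∑ i, x ω i ^ 2) ^ 2) μ)
    (hv4 : Integrable (fun ω => (∑ i, v ω i ^ 2) ^ 2) μ) :
    ∫ ω, ∑ a, ∑ b, gradientEstimate H D C K (x ω) (v ω) a b ^ 2 ∂μ
      ≤ gradientGain H D C bK ^ 2
          * (∫ ω, (∑ i, x ω i ^ 2) ^ 2 ∂μ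
            + 2 * (∫ ω, ∑ i, x ω i ^ 2 ∂μ) * (∫ ω, ∑ i, v ω i ^ 2 ∂μ)
            + ∫ ω, (∑ i, v ω i ^ 2) ^ 2 ∂μ) := by
  have hS := memLp_two_sum_sq hx hx4
  have hT := memLp_two_sum_sq hv hv4
  have hST : IndepFun (fun ω => ∑ i, x ω i ^ 2) (fun ω => ∑ i, v ω i ^ 2) μ :=
    hindep.comp (φ := fun u : n → ℝ => ∑ i, u i ^ 2) (ψ := fun u : p → ℝ => ∑ i, u i ^ 2)
      (by fun_prop) (by fun_prop)
  rw [← integral_add_sq_of_indepFun hS hT hST, ← integral_const_mul]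
  simp only [← mul_pow]
  exact integral_mono (integrable_sum_sum_gradientEstimate_sq H D C K hx hv hx4 hv4)
    ((hS.add hT).const_mul _).integrable_sq
    fun ω => sum_sum_gradientEstimate_sq_le H D C hK (x ω) (v ω)

theorem stmt_7_general (H : Matrix l n ℝ) (D : Matrix l m ℝ) (C : Matrix p n ℝ)
    {K : Matrix m p ℝ} {bK : ℝ} (hK : opNorm K ≤ bK)
    (hx : AEMeasurable x μ) (hv : AEMeasurable v μ) (hindep : IndepFun x v μ)
    {Vxx : Matrix n n ℝ} {Vvv : Matrix p p ℝ}
    (hVxxInt : ∀ i, Integrable (fun ω => x ω i * x ω i) μ)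
    (hVxx : ∀ i j, ∫ ω, x ω i * x ω j ∂μ = Vxx i j)
    (hVvvInt : ∀ i, Integrable (fun ω => v ω i * v ω i) μ)
    (hVvv : ∀ i j, ∫ ω, v ω i * v ω j ∂μ = Vvv i j) {κx κv : ℝ}
    (hx4Int : Integrable (fun ω => (∑ i, x ω i ^ 2) ^ 2) μ)
    (hx4 : ∫ ω, (∑ i, x ω i ^ 2) ^ 2 ∂μ ≤ κx)
    (hv4Int : Integrable (fun ω => (∑ i, v ω i ^ 2) ^ 2) μ)
    (hv4 : ∫ ω, (∑ i, v ω i ^ 2) ^ 2 ∂μ ≤ κv) :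
    Integrable (fun ω => ∑ a, ∑ b, gradientEstimate H D C K (x ω) (v ω) a b ^ 2) μ ∧
    ∫ ω, ∑ a, ∑ b, gradientEstimate H D C K (x ω) (v ω) a b ^ 2 ∂μ
      ≤ 4 * opNorm D ^ 2 * (opNorm H + bK * opNorm D * (opNorm C + 1)) ^ 2
          * (opNorm C + 1) ^ 2 * (κx + 2 * Vxx.trace * Vvv.trace + κv) := by
  refine ⟨integrable_sum_sum_gradientEstimate_sq H D C K hx hv hx4Int hv4Int, ?_⟩
  have hbound := integral_sum_sum_gradientEstimate_sq_le H D C hK hx hv hindep hx4Int hv4Int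
  rw [integral_sum_sq_eq_trace hVxxInt fun i => hVxx i i,
    integral_sum_sq_eq_trace hVvvInt fun i => hVvv i i] at hbound
  calc ∫ ω, ∑ a, ∑ b, gradientEstimate H D C K (x ω) (v ω) a b ^ 2 ∂μ
      ≤ gradientGain H D C bK ^ 2 * (κx + 2 * Vxx.trace * Vvv.trace + κv) :=
        hbound.trans (by gcongr)
    _ = _ := by unfold gradientGain; ring

end GradientEstimate

/-- If `‖K‖₂ ≤ b_K`, then the gradient estimate `G = 2 Dᵀ z yᵀ` has
bounded second moment:
`E[‖2 Dᵀ z yᵀ‖_F²] ≤ 4‖D‖₂²(‖H‖₂ + b_K‖D‖₂(‖C‖₂+1))²(‖C‖₂+1)²(κ_x + 2 Tr V_xx Tr V_vv + κ_v)`. -/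
theorem stmt_7
    {Ω : Type*} [MeasurableSpace Ω] (μ : Measure Ω) [IsProbabilityMeasure μ]
    (n p l m : ℕ) (hn : 0 < n) (hp : 0 < p) (hl : 0 < l) (hm : 0 < m)
    (H : Matrix (Fin l) (Fin n) ℝ) (D : Matrix (Fin l) (Fin m) ℝ)
    (C : Matrix (Fin p) (Fin n) ℝ) (bK : ℝ) (hbK : 0 < bK)
    (x : Ω → Fin n → ℝ) (v : Ω → Fin p → ℝ)
    (hxmeas : Measurable x) (hvmeas : Measurable v)
    (hindep : IndepFun x v μ)
    (hxmean : ∀ i, ∫ ω, x ω i ∂μ = 0) (hvmean : ∀ i, ∫ ω, v ω i ∂μ = 0)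
    (Vxx : Matrix (Fin n) (Fin n) ℝ) (Vvv : Matrix (Fin p) (Fin p) ℝ)
    (hVxxInt : ∀ i j, Integrable (fun ω => x ω i * x ω j) μ)
    (hVxx : ∀ i j, ∫ ω, x ω i * x ω j ∂μ = Vxx i j)
    (hVvvInt : ∀ i j, Integrable (fun ω => v ω i * v ω j) μ)
    (hVvv : ∀ i j, ∫ ω, v ω i * v ω j ∂μ = Vvv i j)
    (κx κv : ℝ)
    (hx4Int : Integrable (fun ω => (∑ i, (x ω i) ^ 2) ^ 2) μ)
    (hx4 : ∫ ω, (∑ i, (x ω i) ^ 2) ^ 2 ∂μ ≤ κx)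
    (hv4Int : Integrable (fun ω => (∑ i, (v ω i) ^ 2) ^ 2) μ)
    (hv4 : ∫ ω, (∑ i, (v ω i) ^ 2) ^ 2 ∂μ ≤ κv)
    (K : Matrix (Fin m) (Fin p) ℝ) (hK : opNorm K ≤ bK) :
    (∫ ω, ∑ a, ∑ b,
        (2 * (Dᵀ.mulVec (H.mulVec (x ω)
              + D.mulVec (K.mulVec (C.mulVec (x ω) + v ω)))) a
           * (C.mulVec (x ω) + v ω) b) ^ 2 ∂μ)
      ≤ 4 * (opNorm D) ^ 2 * (opNorm H + bK * opNorm D * (opNorm C + 1)) ^ 2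
          * (opNorm C + 1) ^ 2 * (κx + 2 * Vxx.trace * Vvv.trace + κv) :=
  (stmt_7_general H D C hK hxmeas.aemeasurable hvmeas.aemeasurable hindep
    (fun i => hVxxInt i i) hVxx (fun i => hVvvInt i i) hVvv hx4Int hx4 hv4Int hv4).2
end
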